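/- Let A and B be nondegenerate SVNR-sets of dimension p on X = {x_1, …, x_n}. Then the Jaccard similarity measure satisfies: (1) 0 ≤ (A,B)_J ≤ 1; (2) (A,B)_J = (B,A)_J; (3) if t_A^i(x_j) = t_B^i(x_j), i_A^i(x_j) = i_B^i(x_j) and f_A^i(x_j) = f_B^i(x_j) for every j ∈ {1,…,n} and i ∈ {1,…,p}, then (A,B)_J = 1. -/

import Mathlib

open Finset

noncomputable def jaccardSVNR (n p : ℕ)
    (tA iA fA tB iB fB : Fin p → Fin n → ℝ) : ℝ :=
  (1 / ((n : ℝ) * (p : ℝ))) * ∑ j : Fin n, ∑ i : Fin p,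
    (tA i j * tB i j + iA i j * iB i j + fA i j * fB i j) /
      ((tA i j ^ 2 + iA i j ^ 2 + fA i j ^ 2) + (tB i j ^ 2 + iB i j ^ 2 + fB i j ^ 2)
        - (tA i j * tB i j + iA i j * iB i j + fA i j * fB i j))

/-! Each summand is the Tanimoto coefficient `⟪u, v⟫ / (‖u‖² + ‖v‖² - ⟪u, v⟫)` of two vectors of
`ℝ³`. Its denominator exceeds its numerator by `‖u - v‖²`, and twice the denominator is
`‖u‖² + ‖v‖² + ‖u - v‖²`. Hence the coefficient is at most `1`, has the sign of `⟪u, v⟫`, and equals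
`1` when `u = v ≠ 0`; these properties pass to averages. -/

open scoped BigOperators InnerProductSpace

section Tanimoto

variable {E : Type*} [SeminormedAddCommGroup E] [InnerProductSpace ℝ E]

/-- The Tanimoto coefficient of two vectors, the extension of the Jaccard index from sets (via their
indicator vectors) to a real inner product space. It takes the junk value `0` when both vectors have
norm zero. -/
noncomputable def tanimotoCoeff (u v : E) : ℝ :=
  ⟪u, v⟫_ℝ / (‖u‖ ^ 2 + ‖v‖ ^ 2 - ⟪u, v⟫_ℝ)

theorem norm_sq_add_norm_sq_sub_inner_nonneg (u v : E) :
    0 ≤ ‖u‖ ^ 2 + ‖v‖ ^ 2 - ⟪u, v⟫_ℝ := by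
  have two_mul_eq : 2 * (‖u‖ ^ 2 + ‖v‖ ^ 2 - ⟪u, v⟫_ℝ) = ‖u‖ ^ 2 + ‖v‖ ^ 2 + ‖u - v‖ ^ 2 := by
    rw [norm_sub_sq_real]
    ring
  linarith [sq_nonneg ‖u‖, sq_nonneg ‖v‖, sq_nonneg ‖u - v‖]

theorem inner_le_norm_sq_add_norm_sq_sub_inner (u v : E) :
    ⟪u, v⟫_ℝ ≤ ‖u‖ ^ 2 + ‖v‖ ^ 2 - ⟪u, v⟫_ℝ := by
  linarith [norm_sub_sq_real u v, sq_nonneg ‖u - v‖]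

theorem tanimotoCoeff_comm (u v : E) : tanimotoCoeff u v = tanimotoCoeff v u := by
  rw [tanimotoCoeff, tanimotoCoeff, real_inner_comm, add_comm (‖u‖ ^ 2)]

theorem tanimotoCoeff_nonneg {u v : E} (h : 0 ≤ ⟪u, v⟫_ℝ) : 0 ≤ tanimotoCoeff u v :=
  div_nonneg h (norm_sq_add_norm_sq_sub_inner_nonneg u v)

theorem tanimotoCoeff_le_one (u v : E) : tanimotoCoeff u v ≤ 1 :=
  div_le_one_of_le₀ (inner_le_norm_sq_add_norm_sq_sub_inner u v)
    (norm_sq_add_norm_sq_sub_inner_nonneg u v)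

theorem tanimotoCoeff_self {u : E} (hu : ‖u‖ ≠ 0) : tanimotoCoeff u u = 1 := by
  rw [tanimotoCoeff, real_inner_self_eq_norm_sq, add_sub_cancel_right,
    div_self (pow_ne_zero 2 hu)]

end Tanimoto

section SVNR

/-- The triple `(t_A^i(x_j), i_A^i(x_j), f_A^i(x_j))` as a vector of Euclidean space, indexed by the
pair `(j, i)`: element first, component second, the order of summation in `jaccardSVNR`. -/
noncomputable def svnrVector {n p : ℕ} (t i f : Fin p → Fin n → ℝ) (k : Fin n × Fin p) :
    EuclideanSpace ℝ (Fin 3) :=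
  !₂[t k.2 k.1, i k.2 k.1, f k.2 k.1]

variable {n p : ℕ} (tA iA fA tB iB fB : Fin p → Fin n → ℝ)

theorem inner_svnrVector (k : Fin n × Fin p) :
    ⟪svnrVector tA iA fA k, svnrVector tB iB fB k⟫_ℝ =
      tA k.2 k.1 * tB k.2 k.1 + iA k.2 k.1 * iB k.2 k.1 + fA k.2 k.1 * fB k.2 k.1 := by
  simp [svnrVector, PiLp.inner_apply, Fin.sum_univ_three, mul_comm]

theorem norm_svnrVector_sq (k : Fin n × Fin p) :
    ‖svnrVector tA iA fA k‖ ^ 2 = tA k.2 k.1 ^ 2 + iA k.2 k.1 ^ 2 + fA k.2 k.1 ^ 2 := by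
  simp [svnrVector, EuclideanSpace.real_norm_sq_eq, Fin.sum_univ_three]

theorem svnrVector_eq_zero_iff (k : Fin n × Fin p) :
    svnrVector tA iA fA k = 0 ↔ tA k.2 k.1 = 0 ∧ iA k.2 k.1 = 0 ∧ fA k.2 k.1 = 0 := by
  simp [svnrVector]

theorem jaccardSVNR_eq_expect :
    jaccardSVNR n p tA iA fA tB iB fB =
      𝔼 k, tanimotoCoeff (svnrVector tA iA fA k) (svnrVector tB iB fB k) := by
  simp only [jaccardSVNR, tanimotoCoeff, inner_svnrVector, norm_svnrVector_sq,
    Fintype.expect_eq_sum_div_card, Fintype.sum_prod_type, Fintype.card_prod, Fintype.card_fin,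
    Nat.cast_mul, one_div_mul_eq_div]

theorem jaccardSVNR_comm :
    jaccardSVNR n p tA iA fA tB iB fB = jaccardSVNR n p tB iB fB tA iA fA := by
  rw [jaccardSVNR_eq_expect, jaccardSVNR_eq_expect]
  exact expect_congr rfl fun _ _ => tanimotoCoeff_comm _ _

variable {tA iA fA tB iB fB}

theorem jaccardSVNR_nonneg
    (hAB : ∀ i j, 0 ≤ tA i j * tB i j + iA i j * iB i j + fA i j * fB i j) :
    0 ≤ jaccardSVNR n p tA iA fA tB iB fB := by
  rw [jaccardSVNR_eq_expect]
  refine expect_nonneg fun k _ => tanimotoCoeff_nonneg ?_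
  rw [inner_svnrVector]
  exact hAB k.2 k.1

theorem jaccardSVNR_le_one [NeZero n] [NeZero p] : jaccardSVNR n p tA iA fA tB iB fB ≤ 1 := by
  rw [jaccardSVNR_eq_expect]
  exact expect_le univ_nonempty fun k _ => tanimotoCoeff_le_one _ _

theorem jaccardSVNR_self [NeZero n] [NeZero p]
    (hA : ∀ i j, ¬(tA i j = 0 ∧ iA i j = 0 ∧ fA i j = 0)) :
    jaccardSVNR n p tA iA fA tA iA fA = 1 := by
  have coeff_eq_one (k : Fin n × Fin p) :
      tanimotoCoeff (svnrVector tA iA fA k) (svnrVector tA iA fA k) = 1 :=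
    tanimotoCoeff_self <| norm_ne_zero_iff.2 <|
      (svnrVector_eq_zero_iff tA iA fA k).not.2 (hA k.2 k.1)
  simp only [jaccardSVNR_eq_expect, coeff_eq_one, Fintype.expect_const]

end SVNR

theorem stmt_0_general
    (n p : ℕ) (hn : 1 ≤ n) (hp : 1 ≤ p)
    (tA iA fA tB iB fB : Fin p → Fin n → ℝ)
    (hAB : ∀ i j, 0 ≤ tA i j * tB i j + iA i j * iB i j + fA i j * fB i j)
    (hnd : ∀ i j, ¬((tA i j = 0 ∧ iA i j = 0 ∧ fA i j = 0) ∧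
                      (tB i j = 0 ∧ iB i j = 0 ∧ fB i j = 0))) :
    (0 ≤ jaccardSVNR n p tA iA fA tB iB fB ∧ jaccardSVNR n p tA iA fA tB iB fB ≤ 1) ∧
    jaccardSVNR n p tA iA fA tB iB fB = jaccardSVNR n p tB iB fB tA iA fA ∧
    ((∀ i j, tA i j = tB i j ∧ iA i j = iB i j ∧ fA i j = fB i j) →
      jaccardSVNR n p tA iA fA tB iB fB = 1) := by
  have : NeZero n := NeZero.of_pos hn
  have : NeZero p := NeZero.of_pos hp
  refine ⟨⟨jaccardSVNR_nonneg hAB, jaccardSVNR_le_one⟩, jaccardSVNR_comm .., fun hEq => ?_⟩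
  obtain rfl : tA = tB := funext₂ fun i j => (hEq i j).1
  obtain rfl : iA = iB := funext₂ fun i j => (hEq i j).2.1
  obtain rfl : fA = fB := funext₂ fun i j => (hEq i j).2.2
  exact jaccardSVNR_self fun i j hzero => hnd i j ⟨hzero, hzero⟩

theorem stmt_0
    (n p : ℕ) (hn : 1 ≤ n) (hp : 1 ≤ p)
    (tA iA fA tB iB fB : Fin p → Fin n → ℝ)
    (htA : ∀ i j, tA i j ∈ Set.Icc (0 : ℝ) 1)
    (hiA : ∀ i j, iA i j ∈ Set.Icc (0 : ℝ) 1)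
    (hfA : ∀ i j, fA i j ∈ Set.Icc (0 : ℝ) 1)
    (htB : ∀ i j, tB i j ∈ Set.Icc (0 : ℝ) 1)
    (hiB : ∀ i j, iB i j ∈ Set.Icc (0 : ℝ) 1)
    (hfB : ∀ i j, fB i j ∈ Set.Icc (0 : ℝ) 1)
    (hnd : ∀ i j, ¬((tA i j = 0 ∧ iA i j = 0 ∧ fA i j = 0) ∧
                      (tB i j = 0 ∧ iB i j = 0 ∧ fB i j = 0))) :
    (0 ≤ jaccardSVNR n p tA iA fA tB iB fB ∧ jaccardSVNR n p tA iA fA tB iB fB ≤ 1) ∧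
    jaccardSVNR n p tA iA fA tB iB fB = jaccardSVNR n p tB iB fB tA iA fA ∧
    ((∀ i j, tA i j = tB i j ∧ iA i j = iB i j ∧ fA i j = fB i j) →
      jaccardSVNR n p tA iA fA tB iB fB = 1) :=
  stmt_0_general n p hn hp tA iA fA tB iB fB (fun i j => add_nonneg
    (add_nonneg (mul_nonneg (htA i j).1 (htB i j).1) (mul_nonneg (hiA i j).1 (hiB i j).1))
    (mul_nonneg (hfA i j).1 (hfB i j).1)) hnd
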